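/- For every ε > 0 and every graph G with G →_2 K_3 (where K_3 is the triangle), there exists t_0 such that for all t ≥ t_0, the blowup Ramsey number satisfies B_2(G → K_3; t) ≤ 2^{(4+ε)t}. -/

import Mathlib

/-- The `n`-blowup of a graph: each vertex is replaced by an independent set of `n` vertices,
and each edge by a complete bipartite graph between the corresponding sets. -/
def blowupGraph {V : Type} (G : SimpleGraph V) (n : ℕ) : SimpleGraph (V × Fin n) :=
  SimpleGraph.comap Prod.fst G

/-- The coloring `C` admits a monochromatic copy of `H` in `G`. -/
def HasMonoCopy {V α : Type} (G : SimpleGraph V) (H : SimpleGraph α) {r : ℕ}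
    (C : Sym2 V → Fin r) : Prop :=
  ∃ (f : α → V) (c : Fin r), Function.Injective f ∧
    ∀ a b, H.Adj a b → G.Adj (f a) (f b) ∧ C s(f a, f b) = c

/-- `G →_r H`: every `r`-coloring of the edges of `G` contains a monochromatic copy of `H`. -/
def ArrowsFor {V α : Type} (G : SimpleGraph V) (H : SimpleGraph α) (r : ℕ) : Prop :=
  ∀ C : Sym2 V → Fin r, HasMonoCopy G H C

/-- The coloring `C` of `G[n]` admits a monochromatic canonical copy of `H[t]`:
an embedding `φ` of `H` into `G`, together with `t` blowup vertices `ψ a` in the part indexed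
by `φ a` for each vertex `a` of `H`, all of whose blowup edges receive the same color `c`. -/
def HasMonoCanonicalBlowup {V α : Type} (G : SimpleGraph V) (H : SimpleGraph α)
    (n t r : ℕ) (C : Sym2 (V × Fin n) → Fin r) : Prop :=
  ∃ (φ : α → V) (ψ : α → Fin t → Fin n) (c : Fin r),
    Function.Injective φ ∧ (∀ a, Function.Injective (ψ a)) ∧
    ∀ a b, H.Adj a b → G.Adj (φ a) (φ b) ∧ ∀ i j, C s((φ a, ψ a i), (φ b, ψ b j)) = c

/-- Every `r`-coloring of the edges of `G[n]` contains a monochromatic canonical copy of `H[t]`.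
The blowup Ramsey number `B_r(G → H; t)` is the minimum such `n`. -/
def BlowupArrow {V α : Type} (G : SimpleGraph V) (H : SimpleGraph α) (r n t : ℕ) : Prop :=
  ∀ C : Sym2 (V × Fin n) → Fin r, HasMonoCanonicalBlowup G H n t r C

open Classical in
/-- Number of related pairs in `X × Y`, as a real. -/
noncomputable def ecount {α β : Type} (r : α → β → Prop) (X : Finset α) (Y : Finset β) : ℝ :=
  ∑ x ∈ X, ∑ y ∈ Y, if r x y then (1:ℝ) else 0

/-- Lower regularity with density at least one half. -/
def LowReg {α β : Type} (δ : ℝ) (r : α → β → Prop) (X : Finset α) (Y : Finset β) : Prop :=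
  ∀ X' ⊆ X, ∀ Y' ⊆ Y, δ * (X.card : ℝ) ≤ X'.card → δ * (Y.card : ℝ) ≤ Y'.card →
    (1/2 - δ) * ((X'.card : ℝ) * Y'.card) ≤ ecount r X' Y'

theorem ecount_nonneg {α β : Type} (r : α → β → Prop) (X : Finset α) (Y : Finset β) :
    0 ≤ ecount r X Y := by
  unfold ecount
  refine Finset.sum_nonneg fun x _ => Finset.sum_nonneg fun y _ => ?_
  split_ifs <;> norm_num

theorem ecount_le {α β : Type} (r : α → β → Prop) (X : Finset α) (Y : Finset β) :
    ecount r X Y ≤ (X.card : ℝ) * Y.card := by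
  unfold ecount
  calc _ ≤ ∑ x ∈ X, ∑ y ∈ Y, (1:ℝ) := by
        refine Finset.sum_le_sum fun x _ => Finset.sum_le_sum fun y _ => ?_
        split_ifs <;> norm_num
    _ = _ := by simp

theorem ecount_flip {α β : Type} (r : α → β → Prop) (X : Finset α) (Y : Finset β) :
    ecount (fun y x => r x y) Y X = ecount r X Y := by
  unfold ecount
  exact Finset.sum_comm

theorem ecount_compl {α β : Type} (r : α → β → Prop) (X : Finset α) (Y : Finset β) :
    ecount r X Y + ecount (fun x y => ¬ r x y) X Y = (X.card : ℝ) * Y.card := by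
  unfold ecount
  rw [← Finset.sum_add_distrib]
  calc _ = ∑ x ∈ X, ∑ y ∈ Y, (1:ℝ) := by
        refine Finset.sum_congr rfl fun x _ => ?_
        rw [← Finset.sum_add_distrib]
        refine Finset.sum_congr rfl fun y _ => ?_
        by_cases h : r x y <;> simp [h]
    _ = _ := by simp

open Classical in
theorem ecount_split {α β : Type} (r : α → β → Prop) {X X' : Finset α} {Y Y' : Finset β}
    (hX : X' ⊆ X) (hY : Y' ⊆ Y) :
    ecount r X Y = ecount r X' Y' + ecount r (X \ X') Y + ecount r X' (Y \ Y') := by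
  unfold ecount
  rw [← Finset.sum_sdiff hX]
  have : ∑ x ∈ X', ∑ y ∈ Y, (if r x y then (1:ℝ) else 0) =
      ∑ x ∈ X', ∑ y ∈ Y', (if r x y then (1:ℝ) else 0) +
      ∑ x ∈ X', ∑ y ∈ Y \ Y', (if r x y then (1:ℝ) else 0) := by
    rw [← Finset.sum_add_distrib]
    refine Finset.sum_congr rfl fun x _ => ?_
    rw [← Finset.sum_sdiff hY, add_comm]
  rw [this]; ring

open Classical in
theorem ecount_eq_sum_card {α β : Type} (r : α → β → Prop) (X : Finset α) (Y : Finset β) :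
    ecount r X Y = ∑ x ∈ X, ((Y.filter (fun y => r x y)).card : ℝ) := by
  unfold ecount
  refine Finset.sum_congr rfl fun x _ => ?_
  simp

theorem LowReg.flip {α β : Type} {δ : ℝ} {r : α → β → Prop} {X : Finset α} {Y : Finset β}
    (h : LowReg δ r X Y) : LowReg δ (fun y x => r x y) Y X := by
  intro Y' hY X' hX h1 h2
  rw [ecount_flip, mul_comm (Y'.card : ℝ)]
  exact h X' hX Y' hY h2 h1

theorem LowReg.mono {α β : Type} {δ ρ : ℝ} (hδ : 0 ≤ δ) (hρ : ρ ≤ 1)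
    {r : α → β → Prop} {X X' : Finset α} {Y Y' : Finset β}
    (h : LowReg (δ * ρ) r X Y) (hX : X' ⊆ X) (hY : Y' ⊆ Y)
    (h1 : ρ * (X.card : ℝ) ≤ X'.card) (h2 : ρ * (Y.card : ℝ) ≤ Y'.card) :
    LowReg δ r X' Y' := by
  intro P hP Q hQ hp hq
  have := h P (hP.trans hX) Q (hQ.trans hY) (by nlinarith) (by nlinarith)
  refine le_trans ?_ this
  have : 0 ≤ (P.card : ℝ) * Q.card := by positivity
  have : δ * ρ ≤ δ := by nlinarith
  nlinarith

set_option maxHeartbeats 1000000 in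
/-- Density-extremal subpair. -/
theorem half_lemma (δ : ℝ) (hδ : 0 < δ) (hδ2 : δ ≤ 1/2) :
    ∃ ρ : ℝ, 0 < ρ ∧ ρ ≤ 1 ∧ ∀ (α β : Type) (r : α → β → Prop) (X : Finset α) (Y : Finset β),
      (1/2) * ((X.card : ℝ) * Y.card) ≤ ecount r X Y →
      ∃ X' ⊆ X, ∃ Y' ⊆ Y, ρ * (X.card : ℝ) ≤ X'.card ∧ ρ * (Y.card : ℝ) ≤ Y'.card ∧
        LowReg δ r X' Y' := by
  obtain ⟨η, hη⟩ : ∃ η : ℝ, η = δ ^ 3 := ⟨_, rfl⟩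
  have hη0 : 0 < η := by rw [hη]; positivity
  have hη1 : η ≤ δ ^ 2 / 2 := by rw [hη]; nlinarith [sq_nonneg δ]
  have hη2 : η < 1 := by nlinarith
  refine ⟨(1/2 : ℝ) ^ (1/η), by positivity, ?_, ?_⟩
  · exact Real.rpow_le_one (by norm_num) (by norm_num) (by positivity)
  intro α β r X Y hXY
  have hρ1 : (1/2 : ℝ) ^ (1/η) ≤ 1 :=
    Real.rpow_le_one (by norm_num) (by norm_num) (by positivity)
  rcases X.eq_empty_or_nonempty with hX | hX
  · subst hX
    refine ⟨∅, by simp, Y, by simp, by simp, by nlinarith [Y.card.cast_nonneg (α := ℝ)], ?_⟩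
    intro P hP Q hQ _ _
    have : P = ∅ := by simpa using hP
    subst this
    simp [ecount]
  rcases Y.eq_empty_or_nonempty with hY | hY
  · subst hY
    refine ⟨X, by simp, ∅, by simp, by nlinarith [X.card.cast_nonneg (α := ℝ)], by simp, ?_⟩
    intro P hP Q hQ _ _
    have : Q = ∅ := by simpa using hQ
    subst this
    simp [ecount]
  classical
  obtain ⟨⟨X', Y'⟩, hmem, hmax⟩ := Finset.exists_max_image
    ((X.powerset.filter (·.Nonempty)) ×ˢ (Y.powerset.filter (·.Nonempty)))
    (fun p => ecount r p.1 p.2 / ((p.1.card : ℝ) * p.2.card) ^ (1 - η))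
    ⟨(X, Y), by simp [hX, hY]⟩
  simp only [Finset.mem_product, Finset.mem_filter, Finset.mem_powerset] at hmem hmax
  obtain ⟨⟨hX', hX'n⟩, hY', hY'n⟩ := hmem
  have hx : (0:ℝ) < X.card := by exact_mod_cast hX.card_pos
  have hy : (0:ℝ) < Y.card := by exact_mod_cast hY.card_pos
  have hx' : (0:ℝ) < X'.card := by exact_mod_cast hX'n.card_pos
  have hy' : (0:ℝ) < Y'.card := by exact_mod_cast hY'n.card_pos
  have hxx : (X'.card : ℝ) ≤ X.card := by exact_mod_cast Finset.card_le_card hX'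
  have hyy : (Y'.card : ℝ) ≤ Y.card := by exact_mod_cast Finset.card_le_card hY'
  obtain ⟨x', hx'e⟩ : ∃ x' : ℝ, x' = X'.card := ⟨_, rfl⟩
  obtain ⟨y', hy'e⟩ : ∃ x' : ℝ, x' = Y'.card := ⟨_, rfl⟩
  obtain ⟨x, hxe⟩ : ∃ x' : ℝ, x' = X.card := ⟨_, rfl⟩
  obtain ⟨y, hye⟩ : ∃ x' : ℝ, x' = Y.card := ⟨_, rfl⟩
  obtain ⟨E, hE⟩ : ∃ E, E = ecount r X' Y' := ⟨_, rfl⟩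
  have hEle : E ≤ x' * y' := by rw [hE, hx'e, hy'e]; exact ecount_le _ _ _
  have hE0 : 0 ≤ E := by rw [hE]; exact ecount_nonneg _ _ _
  have h0 := hmax (X, Y) ⟨⟨subset_rfl, hX⟩, subset_rfl, hY⟩
  simp only at h0
  rw [← hx'e, ← hy'e, ← hxe, ← hye, ← hE] at h0
  rw [← hxe, ← hye] at hXY
  rw [← hx'e] at hx' hxx
  rw [← hy'e] at hy' hyy
  rw [← hxe] at hx hxx
  rw [← hye] at hy hyy
  have hxy : 0 < x * y := by positivity
  have hxy' : 0 < x' * y' := by positivity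
  have hle : x' * y' ≤ x * y := by gcongr
  have key1 : (1/2) * (x*y) ^ η ≤ E / (x' * y') ^ (1 - η) := by
    refine le_trans ?_ h0
    rw [le_div_iff₀ (by positivity), mul_assoc, ← Real.rpow_add hxy]
    simpa using hXY
  have key2 : E / (x' * y') ^ (1 - η) = E / (x' * y') * (x' * y') ^ η := by
    rw [Real.rpow_sub hxy', Real.rpow_one]
    field_simp
  have hd1 : E / (x' * y') ≤ 1 := by rw [div_le_one hxy']; exact hEle
  have hpow : (x' * y') ^ η ≤ (x * y) ^ η := Real.rpow_le_rpow hxy'.le hle hη0.le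
  have hpos : 0 < (x' * y') ^ η := by positivity
  have hpos2 : 0 < (x * y) ^ η := by positivity
  have hd : 1/2 ≤ E / (x' * y') := by
    by_contra hcon
    push Not at hcon
    have : E / (x' * y') * (x' * y') ^ η < 1/2 * (x * y) ^ η := by
      calc _ < 1/2 * (x' * y') ^ η := by gcongr
        _ ≤ _ := by gcongr
    linarith
  have hEge : 1/2 * (x' * y') ≤ E := by rwa [le_div_iff₀ hxy'] at hd
  have hsize : (1/2 : ℝ) ^ (1/η) * (x * y) ≤ x' * y' := by
    rw [← Real.rpow_le_rpow_iff (z := η) (by positivity) hxy'.le hη0,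
      Real.mul_rpow (by positivity) hxy.le, ← Real.rpow_mul (by norm_num)]
    rw [one_div_mul_cancel hη0.ne', Real.rpow_one]
    calc _ ≤ E / (x' * y') * (x' * y') ^ η := by linarith
      _ ≤ 1 * (x' * y') ^ η := by gcongr
      _ = _ := one_mul _
  have hρ0 : 0 < (1/2 : ℝ) ^ (1/η) := by positivity
  refine ⟨X', hX', Y', hY', ?_, ?_, ?_⟩
  · rw [← hx'e, ← hxe]
    have : ((1/2 : ℝ) ^ (1/η) * x) * y ≤ x' * y := by nlinarith
    exact le_of_mul_le_mul_right this hy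
  · rw [← hy'e, ← hye]
    have : ((1/2 : ℝ) ^ (1/η) * y) * x ≤ y' * x := by nlinarith
    exact le_of_mul_le_mul_right this hx
  · have bound : ∀ P ⊆ X', ∀ Q ⊆ Y', ecount r P Q ≤
        E * (((P.card : ℝ) * Q.card) / (x' * y') + η) := by
      intro P hP Q hQ
      rcases P.eq_empty_or_nonempty with hPe | hPn
      · subst hPe
        simp [ecount]; positivity
      rcases Q.eq_empty_or_nonempty with hQe | hQn
      · subst hQe
        simp [ecount]; positivity
      have h := hmax (P, Q) ⟨⟨hP.trans hX', hPn⟩, hQ.trans hY', hQn⟩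
      simp only at h
      rw [← hx'e, ← hy'e, ← hE] at h
      have hp : (0:ℝ) < P.card := by exact_mod_cast hPn.card_pos
      have hq : (0:ℝ) < Q.card := by exact_mod_cast hQn.card_pos
      rw [div_le_iff₀ (by positivity)] at h
      refine h.trans ?_
      rw [div_mul_eq_mul_div, mul_div_assoc, ← Real.div_rpow (by positivity) (by positivity)]
      gcongr
      have hz : 0 ≤ (P.card : ℝ) * Q.card / (x' * y') := by positivity
      have := Real.geom_mean_le_arith_mean2_weighted (w₁ := 1 - η) (w₂ := η) (by linarith) hη0.le hz
        zero_le_one (by ring)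
      rw [Real.one_rpow, mul_one] at this
      nlinarith
    intro P hP Q hQ hp hq
    have hs := ecount_split r hP hQ
    have b1 := bound (X' \ P) Finset.sdiff_subset Y' subset_rfl
    have b2 := bound P hP (Y' \ Q) Finset.sdiff_subset
    rw [Finset.cast_card_sdiff hP] at b1
    rw [Finset.cast_card_sdiff hQ] at b2
    rw [← hx'e, ← hy'e] at b1
    rw [← hy'e] at b2
    rw [← hE] at hs
    rw [← hx'e] at hp
    rw [← hy'e] at hq
    obtain ⟨p, hpe⟩ : ∃ p : ℝ, p = P.card := ⟨_, rfl⟩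
    obtain ⟨q, hqe⟩ : ∃ p : ℝ, p = Q.card := ⟨_, rfl⟩
    rw [← hpe] at b1 b2 hp ⊢
    rw [← hqe] at b2 hq ⊢
    have hident : (x' - p) * y' / (x' * y') + η + (p * (y' - q) / (x' * y') + η)
        = 1 - (p * q / (x' * y') - 2 * η) := by
      field_simp; ring
    have h1 : E * (p * q / (x' * y') - 2 * η) ≤ ecount r P Q := by
      have : E ≤ ecount r P Q + E * (1 - (p * q / (x' * y') - 2 * η)) := by
        rw [← hident]; linarith
      linarith
    have hp0 : 0 ≤ p := by rw [hpe]; positivity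
    have hpq : δ * x' * (δ * y') ≤ p * q := by gcongr
    have h2 : δ ^ 2 ≤ p * q / (x' * y') := by
      rw [le_div_iff₀ hxy']; linarith
    have h3 : 1/2 * (x' * y') * (p * q / (x' * y') - 2 * η) ≤ ecount r P Q := by
      refine le_trans ?_ h1
      have : 0 ≤ p * q / (x' * y') - 2 * η := by linarith
      gcongr
    have h4 : 1/2 * (x' * y') * (p * q / (x' * y') - 2 * η) = 1/2 * (p * q) - η * (x' * y') := by
      field_simp
    have h5 : η * (x' * y') ≤ δ * (p * q) := by
      have h6 : δ * (δ * x' * (δ * y')) ≤ δ * (p * q) := by gcongr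
      have h7 : η * (x' * y') = δ * (δ * x' * (δ * y')) := by rw [hη]; ring
      rw [h7]; exact h6
    rw [h4] at h3
    have h8 : (1 / 2 - δ) * (p * q) = 1/2 * (p * q) - δ * (p * q) := by ring
    rw [h8]
    linarith only [h3, h5]

theorem pair_lemma (δ : ℝ) (hδ : 0 < δ) (hδ2 : δ ≤ 1/2) :
    ∃ ρ : ℝ, 0 < ρ ∧ ρ ≤ 1 ∧ ∀ (α β : Type) (r : α → β → Prop) (X : Finset α) (Y : Finset β),
      ∃ X' ⊆ X, ∃ Y' ⊆ Y, ρ * (X.card : ℝ) ≤ X'.card ∧ ρ * (Y.card : ℝ) ≤ Y'.card ∧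
        (LowReg δ r X' Y' ∨ LowReg δ (fun x y => ¬ r x y) X' Y') := by
  obtain ⟨ρ, h0, h1, h⟩ := half_lemma δ hδ hδ2
  refine ⟨ρ, h0, h1, fun α β r X Y => ?_⟩
  have hc := ecount_compl r X Y
  rcases le_total (1/2 * ((X.card : ℝ) * Y.card)) (ecount r X Y) with hh | hh
  · obtain ⟨X', a, Y', b, c, d, e⟩ := h _ _ r X Y hh
    exact ⟨X', a, Y', b, c, d, Or.inl e⟩
  · obtain ⟨X', a, Y', b, c, d, e⟩ := h _ _ (fun x y => ¬ r x y) X Y (by linarith)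
    exact ⟨X', a, Y', b, c, d, Or.inr e⟩

/-- Regularize all pairs in a finite set of edges. -/
theorem family_lemma {V : Type} [Fintype V] (S : Finset (Sym2 V)) (hS : ∀ e ∈ S, ¬ e.IsDiag) :
    ∀ δ : ℝ, 0 < δ → δ ≤ 1/2 → ∃ ρ : ℝ, 0 < ρ ∧ ∀ (n : ℕ) (C : Sym2 (V × Fin n) → Fin 2),
      ∃ A : V → Finset (Fin n), (∀ v, ρ * (n : ℝ) ≤ (A v).card) ∧
        ∀ e ∈ S, ∃ c : Fin 2, ∀ u v, e = s(u, v) →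
          LowReg δ (fun i j => C s((u, i), (v, j)) = c) (A u) (A v) := by
  classical
  induction S using Finset.induction_on with
  | empty =>
    intro δ _ _
    refine ⟨1, one_pos, fun n C => ⟨fun _ => Finset.univ, by simp, by simp⟩⟩
  | insert e S heS ih =>
    intro δ hδ hδ2
    obtain ⟨ρ₁, h10, h11, hpair⟩ := pair_lemma δ hδ hδ2
    obtain ⟨ρ₀, h00, hfam⟩ := ih (fun e he => hS e (Finset.mem_insert_of_mem he)) (δ * ρ₁)
      (by positivity) (by nlinarith)
    refine ⟨ρ₀ * ρ₁, by positivity, fun n C => ?_⟩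
    obtain ⟨A, hA, hreg⟩ := hfam n C
    have hed := hS e (Finset.mem_insert_self _ _)
    induction e using Sym2.ind with
    | _ u v =>
    have huv : u ≠ v := by simpa using hed
    obtain ⟨X', hX, Y', hY, hx, hy, hor⟩ :=
      hpair _ _ (fun i j => C s((u, i), (v, j)) = 0) (A u) (A v)
    set A' : V → Finset (Fin n) := Function.update (Function.update A u X') v Y' with hA'
    have hAu : A' u = X' := by simp [hA', huv]
    have hAv : A' v = Y' := by simp [hA']
    have hAw : ∀ w, w ≠ u → w ≠ v → A' w = A w := by
      intro w h1 h2; simp [hA', h1, h2]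
    have hsub : ∀ w, A' w ⊆ A w ∧ ρ₁ * ((A w).card : ℝ) ≤ (A' w).card := by
      intro w
      by_cases h2 : w = v
      · subst h2; rw [hAv]; exact ⟨hY, hy⟩
      by_cases h1 : w = u
      · subst h1; rw [hAu]; exact ⟨hX, hx⟩
      · rw [hAw w h1 h2]
        exact ⟨subset_rfl, by nlinarith [(A w).card.cast_nonneg (α := ℝ)]⟩
    refine ⟨A', ?_, ?_⟩
    · intro w
      have := hA w
      nlinarith [(hsub w).2]
    · intro e' he'
      rcases Finset.mem_insert.1 he' with rfl | he'
      · have : ∃ c : Fin 2, LowReg δ (fun i j => C s((u, i), (v, j)) = c) X' Y' := by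
          rcases hor with h | h
          · exact ⟨0, h⟩
          · refine ⟨1, ?_⟩
            have heq : (fun i j => ¬ C s((u, i), (v, j)) = 0) =
                (fun i j => C s((u, i), (v, j)) = 1) := by
              funext i j
              apply propext
              generalize C s((u, i), (v, j)) = z
              revert z; decide
            rwa [heq] at h
        obtain ⟨c, hc⟩ := this
        refine ⟨c, fun a b hab => ?_⟩
        rcases Sym2.eq_iff.1 hab with ⟨rfl, rfl⟩ | ⟨rfl, rfl⟩
        · rw [hAu, hAv]; exact hc
        · rw [hAu, hAv]
          have := hc.flip
          have heq : (fun (y x : Fin n) => C s((u, x), (v, y)) = c) =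
              (fun i j => C s((v, i), (u, j)) = c) := by
            funext i j
            rw [Sym2.eq_swap]
          rwa [heq] at this
      · obtain ⟨c, hc⟩ := hreg e' he'
        refine ⟨c, fun a b hab => ?_⟩
        exact (hc a b hab).mono hδ.le h11 (hsub a).1 (hsub b).1 (hsub a).2 (hsub b).2

open Classical in
theorem conc_lemma {α : Type} (δ : ℝ) (hδ : 0 < δ) (hδ2 : δ ≤ 1/4) (m : ℕ) (S : Finset α)
    (N : α → Prop) (hN : (1/2 - δ) * (S.card : ℝ) ≤ (S.filter N).card) :
    (((Fintype.piFinset (fun _ : Fin m => S)).filter (fun R =>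
      ((Finset.univ.filter (fun i => N (R i))).card : ℝ) < (1/2 - 2*δ) * m)).card : ℝ)
      ≤ Real.exp (-(δ^2/2) * m) * (S.card : ℝ) ^ m := by
  set P := Fintype.piFinset (fun _ : Fin m => S) with hP
  set bad := P.filter (fun R =>
      ((Finset.univ.filter (fun i => N (R i))).card : ℝ) < (1/2 - 2*δ) * m) with hbad
  have hsum : ∑ R ∈ P, ∏ i : Fin m, (if N (R i) then Real.exp (-δ) else 1) =
      (∑ a ∈ S, (if N a then Real.exp (-δ) else 1)) ^ m := by
    rw [hP, ← Finset.prod_univ_sum (fun _ : Fin m => S)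
      (fun _ a => if N a then Real.exp (-δ) else (1:ℝ))]
    simp
  have hprod : ∀ R : Fin m → α, ∏ i : Fin m, (if N (R i) then Real.exp (-δ) else 1) =
      Real.exp (-δ * (Finset.univ.filter (fun i => N (R i))).card) := by
    intro R
    rw [Finset.prod_ite]
    simp [← Real.exp_nat_mul, mul_comm]
  have hlow : (bad.card : ℝ) * Real.exp (-δ * ((1/2 - 2*δ) * m)) ≤
      ∑ R ∈ P, ∏ i : Fin m, (if N (R i) then Real.exp (-δ) else 1) := by
    calc _ = ∑ R ∈ bad, Real.exp (-δ * ((1/2 - 2*δ) * m)) := by simp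
      _ ≤ ∑ R ∈ bad, ∏ i : Fin m, (if N (R i) then Real.exp (-δ) else 1) := by
        refine Finset.sum_le_sum fun R hR => ?_
        rw [hprod]
        apply Real.exp_le_exp.2
        have := (Finset.mem_filter.1 hR).2
        nlinarith
      _ ≤ _ := by
        refine Finset.sum_le_sum_of_subset_of_nonneg (Finset.filter_subset _ _) ?_
        intro R _ _
        rw [hprod]; positivity
  have hone : ∑ a ∈ S, (if N a then Real.exp (-δ) else 1) ≤
      (S.card : ℝ) * Real.exp (-(1/2 - δ) * (δ - δ^2)) := by
    have h1 : ∑ a ∈ S, (if N a then Real.exp (-δ) else 1) =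
        (S.card : ℝ) - (S.filter N).card * (1 - Real.exp (-δ)) := by
      have : ∀ a, (if N a then Real.exp (-δ) else 1) =
          1 - (if N a then (1:ℝ) else 0) * (1 - Real.exp (-δ)) := by
        intro a; split_ifs <;> ring
      simp_rw [this]
      rw [Finset.sum_sub_distrib, ← Finset.sum_mul]
      simp
    have h2 : δ - δ^2 ≤ 1 - Real.exp (-δ) := by
      have := Real.abs_exp_sub_one_sub_id_le (x := -δ) (by rw [abs_neg, abs_of_pos hδ]; linarith)
      have := (abs_le.1 this).2
      nlinarith
    have h3 : -(1/2 - δ) * (δ - δ^2) + 1 ≤ Real.exp (-(1/2 - δ) * (δ - δ^2)) :=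
      Real.add_one_le_exp _
    have h4 : 0 ≤ δ - δ^2 := by nlinarith
    have hs : (0:ℝ) ≤ S.card := by positivity
    have h5 : (1/2 - δ) * (S.card : ℝ) * (δ - δ^2) ≤ (S.filter N).card * (1 - Real.exp (-δ)) := by
      gcongr
    rw [h1]
    have := mul_le_mul_of_nonneg_left h3 hs
    nlinarith
  have hone0 : 0 ≤ ∑ a ∈ S, (if N a then Real.exp (-δ) else 1) := by
    refine Finset.sum_nonneg fun a _ => ?_
    split_ifs <;> positivity
  have h6 := hlow.trans (hsum.le.trans (pow_le_pow_left₀ hone0 hone m))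
  rw [mul_pow, ← Real.exp_nat_mul] at h6
  have h7 : (bad.card : ℝ) ≤ (S.card : ℝ) ^ m * Real.exp (m * (-(1/2 - δ) * (δ - δ^2))) *
      Real.exp (δ * ((1/2 - 2*δ) * m)) := by
    have := mul_le_mul_of_nonneg_right h6 (Real.exp_pos (δ * ((1/2 - 2*δ) * m))).le
    rw [mul_assoc (bad.card : ℝ), ← Real.exp_add] at this
    simpa using this
  refine h7.trans ?_
  rw [mul_assoc, ← Real.exp_add, mul_comm]
  gcongr
  have hm : (0:ℝ) ≤ m := by positivity
  have : -(1/2 - δ) * (δ - δ^2) + δ * (1/2 - 2*δ) ≤ -(δ^2/2) := by nlinarith [pow_pos hδ 3]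
  nlinarith

open Classical in
theorem inj_lemma {α : Type} (δ : ℝ) (hδ : 0 < δ) (m : ℕ) (S : Finset α)
    (hS : (m : ℝ)^2 ≤ δ * S.card) (hm : (m:ℝ) ≤ S.card) :
    (((Fintype.piFinset (fun _ : Fin m => S)).filter (fun R => ¬ Function.Injective R)).card : ℝ)
      ≤ δ * (S.card : ℝ) ^ m := by
  have h1 : S.card.descFactorial m ≤
      ((Fintype.piFinset (fun _ : Fin m => S)).filter (fun R => Function.Injective R)).card := by
    have : Fintype.card (Fin m ↪ S) = S.card.descFactorial m := by
      rw [Fintype.card_embedding_eq]; simp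
    rw [← this, ← Finset.card_univ]
    refine Finset.card_le_card_of_injOn (fun f i => (f i : α)) ?_ ?_
    · intro f _
      simp only [Finset.coe_filter, Set.mem_ofPred_eq, Fintype.mem_piFinset]
      exact ⟨fun i => (f i).2, fun i j h => f.injective (Subtype.ext h)⟩
    · intro f _ g _ h
      ext i
      exact congrFun h i
  have h2 := Finset.card_filter_add_card_filter_not (s := Fintype.piFinset (fun _ : Fin m => S))
    (fun R => Function.Injective R)
  have h3 : (Fintype.piFinset (fun _ : Fin m => S)).card = S.card ^ m := by simp
  rw [h3] at h2
  have h4 : ((S.card : ℝ) - m) ^ m ≤ (S.card.descFactorial m : ℝ) := by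
    have h := Nat.pow_sub_le_descFactorial S.card m
    have hmn : m ≤ S.card := by exact_mod_cast hm
    have h5 : (S.card - m) ^ m ≤ S.card.descFactorial m :=
      (Nat.pow_le_pow_left (by omega) m).trans h
    have : (((S.card - m) ^ m : ℕ) : ℝ) ≤ (S.card.descFactorial m : ℝ) := by exact_mod_cast h5
    simpa [Nat.cast_sub hmn] using this
  rcases Nat.eq_zero_or_pos S.card with h0 | hpos
  · have : m = 0 := by
      rw [h0] at hm
      have : m ≤ 0 := by exact_mod_cast hm
      omega
    subst this
    have : ((Fintype.piFinset (fun _ : Fin 0 => S)).filter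
        (fun R => ¬ Function.Injective R)) = ∅ := by
      apply Finset.filter_false_of_mem
      intro R _ h
      exact h (Function.injective_of_subsingleton R)
    rw [this]; simp; positivity
  have hs : (0:ℝ) < S.card := by exact_mod_cast hpos
  have h5 : (1 - δ) * (S.card : ℝ)^m ≤ ((S.card : ℝ) - m) ^ m := by
    have hb := one_add_mul_le_pow (a := -(m / (S.card:ℝ))) (by
      have : (m:ℝ) / S.card ≤ 1 := by rw [div_le_one hs]; exact hm
      linarith) m
    have h6 : ((S.card : ℝ) - m) ^ m = (S.card : ℝ)^m * (1 + -(m / (S.card:ℝ))) ^ m := by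
      rw [← mul_pow]; congr 1; field_simp; ring
    rw [h6, mul_comm]
    gcongr
    refine le_trans ?_ hb
    have : (m:ℝ) * (m / S.card) ≤ δ := by
      rw [← mul_div_assoc, div_le_iff₀ hs]; nlinarith
    linarith
  have h2' : (((Fintype.piFinset (fun _ : Fin m => S)).filter
      (fun R => Function.Injective R)).card : ℝ) +
      ((Fintype.piFinset (fun _ : Fin m => S)).filter
      (fun R => ¬ Function.Injective R)).card = (S.card : ℝ) ^ m := by exact_mod_cast h2
  have h1' : (S.card.descFactorial m : ℝ) ≤
      ((Fintype.piFinset (fun _ : Fin m => S)).filter (fun R => Function.Injective R)).card := by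
    exact_mod_cast h1
  linarith

open Classical in
/-- In a lower regular pair few vertices have small degree into a large set. -/
theorem deg_lemma {α β : Type} {δ : ℝ} (hδ : 0 < δ) {r : α → β → Prop} {X : Finset α}
    {Y Y' : Finset β} (h : LowReg δ r X Y) (hY : Y' ⊆ Y) (hY' : δ * (Y.card : ℝ) ≤ Y'.card) :
    ((X.filter (fun x => ((Y'.filter (r x)).card : ℝ) < (1/2 - δ) * Y'.card)).card : ℝ)
      ≤ δ * X.card := by
  by_contra hcon
  push Not at hcon
  set Z := X.filter (fun x => ((Y'.filter (r x)).card : ℝ) < (1/2 - δ) * Y'.card) with hZ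
  have h1 := h Z (Finset.filter_subset _ _) Y' hY hcon.le hY'
  have hZn : Z.Nonempty := by
    rw [← Finset.card_pos]
    have : (0:ℝ) < Z.card := lt_of_le_of_lt (by positivity) hcon
    exact_mod_cast this
  rw [ecount_eq_sum_card] at h1
  have h2 : ∑ x ∈ Z, ((Y'.filter (fun y => r x y)).card : ℝ) < ∑ x ∈ Z, (1/2 - δ) * (Y'.card : ℝ) :=
    Finset.sum_lt_sum_of_nonempty hZn fun x hx => (Finset.mem_filter.1 hx).2
  simp only [Finset.sum_const, nsmul_eq_mul] at h2
  linarith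

open Classical in
theorem star_lemma {α γ : Type} (δ : ℝ) (hδ : 0 < δ) (hδ2 : δ ≤ 1/4) (m : ℕ)
    (hm : Real.exp (-(δ^2/2) * m) ≤ δ^2) (r : α → γ → Prop) (S : Finset α) (D : Finset γ)
    (hS : (m : ℝ)^2 ≤ δ * S.card) (hmS : (m:ℝ) ≤ S.card)
    (hD : ∀ c ∈ D, (1/2 - δ) * (S.card : ℝ) ≤ (S.filter (fun a => r a c)).card) :
    (1 - 2*δ) * (S.card : ℝ)^m ≤
      ((Fintype.piFinset (fun _ : Fin m => S)).filter (fun R => Function.Injective R ∧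
        (1 - δ) * (D.card : ℝ) ≤ (D.filter (fun c =>
          (1/2 - 2*δ) * (m:ℝ) ≤ (Finset.univ.filter (fun i => r (R i) c)).card)).card)).card := by
  set P := Fintype.piFinset (fun _ : Fin m => S) with hP
  have hPc : (P.card : ℝ) = (S.card : ℝ)^m := by simp [hP]
  set H := P.filter (fun R => δ * (D.card : ℝ) < (D.filter (fun c =>
      ((Finset.univ.filter (fun i => r (R i) c)).card : ℝ) < (1/2 - 2*δ) * (m:ℝ))).card) with hH
  have hHb : (H.card : ℝ) ≤ δ * (S.card : ℝ)^m := by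
    rcases D.eq_empty_or_nonempty with hD0 | hDn
    · have : H = ∅ := by
        apply Finset.filter_false_of_mem
        intro R _
        simp [hD0]
      rw [this]; simp; positivity
    have hd : (0:ℝ) < D.card := by exact_mod_cast hDn.card_pos
    have h1 : (H.card : ℝ) * (δ * D.card) ≤ (D.card : ℝ) * (δ^2 * (S.card : ℝ)^m) := by
      calc (H.card : ℝ) * (δ * D.card) = ∑ R ∈ H, δ * (D.card : ℝ) := by simp
        _ ≤ ∑ R ∈ H, ((D.filter (fun c =>
            ((Finset.univ.filter (fun i => r (R i) c)).card : ℝ) < (1/2 - 2*δ) * (m:ℝ))).card : ℝ) :=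
          Finset.sum_le_sum fun R hR => (Finset.mem_filter.1 hR).2.le
        _ ≤ ∑ R ∈ P, ((D.filter (fun c =>
            ((Finset.univ.filter (fun i => r (R i) c)).card : ℝ) < (1/2 - 2*δ) * (m:ℝ))).card : ℝ) :=
          Finset.sum_le_sum_of_subset_of_nonneg (Finset.filter_subset _ _)
            fun _ _ _ => by positivity
        _ = ∑ c ∈ D, ((P.filter (fun R =>
            ((Finset.univ.filter (fun i => r (R i) c)).card : ℝ) < (1/2 - 2*δ) * (m:ℝ))).card : ℝ) := by
          have := Finset.sum_card_bipartiteAbove_eq_sum_card_bipartiteBelow (s := P) (t := D)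
            (fun R c => ((Finset.univ.filter (fun i => r (R i) c)).card : ℝ) < (1/2 - 2*δ) * (m:ℝ))
          unfold Finset.bipartiteAbove Finset.bipartiteBelow at this
          exact_mod_cast this
        _ ≤ ∑ c ∈ D, (δ^2 * (S.card : ℝ)^m) := by
          refine Finset.sum_le_sum fun c hc => ?_
          refine (conc_lemma δ hδ hδ2 m S (fun a => r a c) (hD c hc)).trans ?_
          gcongr
        _ = _ := by simp
    have h2 : (H.card : ℝ) * (δ * D.card) ≤ (δ * (S.card : ℝ)^m) * (δ * D.card) := by
      refine h1.trans (le_of_eq ?_); ring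
    exact le_of_mul_le_mul_right h2 (by positivity)
  have hI := inj_lemma δ hδ m S hS hmS
  rw [← hP] at hI
  set Gd := P.filter (fun R => Function.Injective R ∧
        (1 - δ) * (D.card : ℝ) ≤ (D.filter (fun c =>
          (1/2 - 2*δ) * (m:ℝ) ≤ (Finset.univ.filter (fun i => r (R i) c)).card)).card) with hGd
  have hsub : P ⊆ Gd ∪ (P.filter (fun R => ¬ Function.Injective R) ∪ H) := by
    intro R hR
    simp only [Finset.mem_union, hGd, hH, Finset.mem_filter, hR, true_and]
    by_contra hcon
    push Not at hcon
    obtain ⟨h1, h2, h3⟩ := hcon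
    have h4 := h1 h2
    have h5 := Finset.card_filter_add_card_filter_not (s := D) (fun c =>
          (1/2 - 2*δ) * (m:ℝ) ≤ (Finset.univ.filter (fun i => r (R i) c)).card)
    simp only [not_le] at h5
    have h6 : ((D.filter (fun c =>
          (1/2 - 2*δ) * (m:ℝ) ≤ (Finset.univ.filter (fun i => r (R i) c)).card)).card : ℝ) +
        (D.filter (fun c =>
          (Finset.univ.filter (fun i => r (R i) c)).card < (1/2 - 2*δ) * (m:ℝ))).card = D.card := by
      exact_mod_cast h5
    linarith
  have h7 := (Finset.card_le_card hsub).trans (Finset.card_union_le _ _)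
  have h8 := Finset.card_union_le (P.filter (fun R => ¬ Function.Injective R)) H
  have h9 : (P.card : ℝ) ≤ Gd.card + ((P.filter (fun R => ¬ Function.Injective R)).card + H.card) := by
    exact_mod_cast h7.trans (by omega)
  linarith

set_option maxHeartbeats 1000000 in
open Classical in
theorem triangle_lemma {α β γ : Type} (δ : ℝ) (hδ : 0 < δ) (hδ2 : δ ≤ 1/16) (m : ℕ) (hm1 : 1 ≤ m)
    (hm : Real.exp (-(δ^2/2) * m) ≤ δ^2)
    (rAB : α → β → Prop) (rAC : α → γ → Prop) (rBC : β → γ → Prop)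
    (A : Finset α) (B : Finset β) (C : Finset γ)
    (hA : 4/δ * (m * 4^m) ≤ (A.card : ℝ)) (hB : 4/δ * (m * 4^m) ≤ (B.card : ℝ))
    (hC : 4/δ * (m * 4^m) ≤ (C.card : ℝ))
    (hAB : LowReg δ rAB A B) (hAC : LowReg δ rAC A C) (hBC : LowReg δ rBC B C) :
    ∃ (R : Finset α) (Q : Finset β) (T : Finset γ),
      (1/2 - 4*δ) * m ≤ R.card ∧ (1/2 - 4*δ) * m ≤ Q.card ∧ (1/2 - 4*δ) * m ≤ T.card ∧
      (∀ a ∈ R, ∀ b ∈ Q, rAB a b) ∧ (∀ a ∈ R, ∀ c ∈ T, rAC a c) ∧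
      (∀ b ∈ Q, ∀ c ∈ T, rBC b c) := by
  have hmR : (1:ℝ) ≤ m := by exact_mod_cast hm1
  have h4m : (m:ℝ) ≤ 4^m := by
    exact_mod_cast (Nat.lt_pow_self (by norm_num : 1 < 4)).le
  have h4p : (0:ℝ) < 4^m := by positivity
  have hA0 : (0:ℝ) < A.card := lt_of_lt_of_le (by positivity) hA
  have hB0 : (0:ℝ) < B.card := lt_of_lt_of_le (by positivity) hB
  have hC0 : (0:ℝ) < C.card := lt_of_lt_of_le (by positivity) hC
  have hA' : 4 * (m * 4^m) ≤ δ * (A.card : ℝ) := by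
    have := mul_le_mul_of_nonneg_left hA hδ.le
    rwa [← mul_assoc, mul_div_cancel₀ _ hδ.ne'] at this
  have hB' : 4 * (m * 4^m) ≤ δ * (B.card : ℝ) := by
    have := mul_le_mul_of_nonneg_left hB hδ.le
    rwa [← mul_assoc, mul_div_cancel₀ _ hδ.ne'] at this
  have hC' : 4 * (m * 4^m) ≤ δ * (C.card : ℝ) := by
    have := mul_le_mul_of_nonneg_left hC hδ.le
    rwa [← mul_assoc, mul_div_cancel₀ _ hδ.ne'] at this
  set bad1 := B.filter (fun b => ((A.filter (fun a => rAB a b)).card : ℝ) < (1/2 - δ) * A.card)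
    with hbad1
  set bad2 := B.filter (fun b => ((C.filter (rBC b)).card : ℝ) < (1/2 - δ) * C.card) with hbad2
  have hb1 : (bad1.card : ℝ) ≤ δ * B.card :=
    deg_lemma hδ hAB.flip subset_rfl (by nlinarith)
  have hb2 : (bad2.card : ℝ) ≤ δ * B.card :=
    deg_lemma hδ hBC subset_rfl (by nlinarith)
  set B1 := B.filter (fun b => (1/2 - δ) * A.card ≤ ((A.filter (fun a => rAB a b)).card : ℝ) ∧
    (1/2 - δ) * C.card ≤ ((C.filter (rBC b)).card : ℝ)) with hB1
  have hB1c : (B.card : ℝ) / 2 ≤ B1.card := by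
    have hsub : B ⊆ B1 ∪ (bad1 ∪ bad2) := by
      intro b hb
      simp only [Finset.mem_union, hB1, hbad1, hbad2, Finset.mem_filter, hb, true_and]
      by_contra hcon
      push Not at hcon
      exact absurd (hcon.1 hcon.2.1) (not_lt.2 hcon.2.2)
    have h7 := (Finset.card_le_card hsub).trans (Finset.card_union_le _ _)
    have h8 := Finset.card_union_le bad1 bad2
    have h9 : (B.card : ℝ) ≤ B1.card + (bad1.card + bad2.card) := by
      exact_mod_cast h7.trans (by omega)
    nlinarith
  let C1 : (Fin m → α) → Finset γ := fun R => C.filter (fun c =>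
    (1/2 - 2*δ) * (m:ℝ) ≤ (Finset.univ.filter (fun i => rAC (R i) c)).card)
  let good : (Fin m → α) → β → Prop := fun R b => Function.Injective R ∧ (∀ i, rAB (R i) b) ∧
    (1/2 - 3*δ) * (C.card : ℝ) ≤ ((C1 R).filter (rBC b)).card
  set P := Fintype.piFinset (fun _ : Fin m => A) with hP
  have hPc : (P.card : ℝ) = (A.card : ℝ)^m := by simp [hP]
  have hgood : ∀ b ∈ B1, 1/2 * ((A.card : ℝ)^m / 4^m) ≤ ((P.filter (fun R => good R b)).card : ℝ) := by
    intro b hb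
    obtain ⟨hbB, hbA, hbC⟩ := Finset.mem_filter.1 hb
    set S := A.filter (fun a => rAB a b) with hS
    have hSA : (A.card : ℝ) / 4 ≤ S.card := by nlinarith
    have hSδ : δ * (A.card : ℝ) ≤ S.card := by nlinarith
    set D := C.filter (fun c => rBC b c ∧
      (1/2 - δ) * (S.card : ℝ) ≤ (S.filter (fun a => rAC a c)).card) with hD
    have hDc : (1/2 - 2*δ) * (C.card : ℝ) ≤ D.card := by
      have hd := deg_lemma hδ hAC.flip (Finset.filter_subset _ _ : S ⊆ A) hSδ
      set badC := C.filter (fun c => ((S.filter (fun a => rAC a c)).card : ℝ) < (1/2 - δ) * S.card)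
        with hbadC
      have hsub : C.filter (rBC b) ⊆ D ∪ badC := by
        intro c hc
        have hc' := Finset.mem_filter.1 hc
        simp only [Finset.mem_union, hD, hbadC, Finset.mem_filter, hc'.1, hc'.2, true_and]
        exact le_or_gt _ _
      have h7 := (Finset.card_le_card hsub).trans (Finset.card_union_le _ _)
      have h9 : ((C.filter (rBC b)).card : ℝ) ≤ D.card + badC.card := by exact_mod_cast h7
      linarith
    have hst := star_lemma δ hδ (by linarith) m hm rAC S D (by nlinarith) (by nlinarith)
      (fun c hc => (Finset.mem_filter.1 hc).2.2)
    have hpow : (A.card : ℝ)^m / 4^m ≤ (S.card : ℝ)^m := by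
      rw [← div_pow]; gcongr
    have h0 : (0:ℝ) ≤ (A.card : ℝ)^m / 4^m := by positivity
    calc 1/2 * ((A.card : ℝ)^m / 4^m) ≤ (1 - 2*δ) * (S.card : ℝ)^m := 
          mul_le_mul (by linarith) hpow h0 (by linarith)
      _ ≤ _ := hst
      _ ≤ _ := by
        norm_cast
        apply Finset.card_le_card
        intro R hR
        obtain ⟨hRP, hRi, hRc⟩ := Finset.mem_filter.1 hR
        rw [Fintype.mem_piFinset] at hRP
        refine Finset.mem_filter.2 ⟨?_, hRi, ?_, ?_⟩
        · rw [hP, Fintype.mem_piFinset]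
          exact fun i => (Finset.mem_filter.1 (hRP i)).1
        · exact fun i => (Finset.mem_filter.1 (hRP i)).2
        · have hsub : (D.filter (fun c =>
              (1/2 - 2*δ) * (m:ℝ) ≤ (Finset.univ.filter (fun i => rAC (R i) c)).card)) ⊆
              (C1 R).filter (rBC b) := by
            intro c hc
            obtain ⟨h1, h2⟩ := Finset.mem_filter.1 hc
            obtain ⟨h3, h4, _⟩ := Finset.mem_filter.1 h1
            exact Finset.mem_filter.2 ⟨Finset.mem_filter.2 ⟨h3, h2⟩, h4⟩
          have hle : ((D.filter (fun c =>
              (1/2 - 2*δ) * (m:ℝ) ≤ (Finset.univ.filter (fun i => rAC (R i) c)).card)).card : ℝ) ≤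
              ((C1 R).filter (rBC b)).card := by exact_mod_cast Finset.card_le_card hsub
          refine le_trans ?_ hle
          refine le_trans ?_ hRc
          nlinarith
  obtain ⟨R, hRP, hR⟩ : ∃ R ∈ P, (m:ℝ) ≤ (B1.filter (fun b => good R b)).card := by
    by_contra hcon
    push Not at hcon
    have h1 : (B1.card : ℝ) * (1/2 * ((A.card : ℝ)^m / 4^m)) ≤ (A.card : ℝ)^m * m := by
      calc _ = ∑ b ∈ B1, (1/2 * ((A.card : ℝ)^m / 4^m)) := by simp
        _ ≤ ∑ b ∈ B1, ((P.filter (fun R => good R b)).card : ℝ) := Finset.sum_le_sum hgood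
        _ = ∑ R ∈ P, ((B1.filter (fun b => good R b)).card : ℝ) := by
          have := Finset.sum_card_bipartiteAbove_eq_sum_card_bipartiteBelow (s := P) (t := B1) good
          unfold Finset.bipartiteAbove Finset.bipartiteBelow at this
          exact_mod_cast this.symm
        _ ≤ ∑ R ∈ P, (m:ℝ) := Finset.sum_le_sum fun R hR => (hcon R hR).le
        _ = _ := by simp [hPc]
    have hAm : (0:ℝ) < (A.card : ℝ)^m := by positivity
    have h2 : (B1.card : ℝ) ≤ 2 * (m * 4^m) := by
      have h3 : (A.card : ℝ)^m * (B1.card : ℝ) ≤ (A.card : ℝ)^m * (2 * (m * 4^m)) := by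
        have h4 : (B1.card : ℝ) * (1/2 * ((A.card : ℝ)^m / 4^m)) * (2 * 4^m) =
          (A.card : ℝ)^m * (B1.card : ℝ) := by field_simp
        rw [← h4]
        calc _ ≤ (A.card : ℝ)^m * m * (2 * 4^m) := by gcongr
          _ = _ := by ring
      exact le_of_mul_le_mul_left h3 hAm
    nlinarith
  obtain ⟨Q, hQsub, hQc⟩ := Finset.exists_subset_card_eq (show m ≤ _ by exact_mod_cast hR)
  have hQg : ∀ b ∈ Q, good R b := fun b hb => (Finset.mem_filter.1 (hQsub hb)).2
  have hRinj : Function.Injective R := by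
    have : Q.Nonempty := by rw [← Finset.card_pos]; omega
    obtain ⟨b, hb⟩ := this
    exact (hQg b hb).1
  set C2 := (C1 R).filter (fun c => (1/2 - 4*δ) * (m:ℝ) ≤ (Q.filter (fun b => rBC b c)).card)
    with hC2
  have hC1C : ((C1 R).card : ℝ) ≤ C.card := by
    exact_mod_cast Finset.card_le_card (Finset.filter_subset _ _)
  have hC2c : δ * (C.card : ℝ) ≤ C2.card := by
    have h1 : (m:ℝ) * ((1/2 - 3*δ) * C.card) ≤ ∑ c ∈ C1 R, ((Q.filter (fun b => rBC b c)).card : ℝ) := by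
      calc _ = ∑ b ∈ Q, ((1/2 - 3*δ) * (C.card:ℝ)) := by simp [hQc]
        _ ≤ ∑ b ∈ Q, (((C1 R).filter (rBC b)).card : ℝ) :=
          Finset.sum_le_sum fun b hb => (hQg b hb).2.2
        _ = _ := by
          have := Finset.sum_card_bipartiteAbove_eq_sum_card_bipartiteBelow (s := Q) (t := C1 R) rBC
          unfold Finset.bipartiteAbove Finset.bipartiteBelow at this
          exact_mod_cast this
    have h2 : ∑ c ∈ C1 R, ((Q.filter (fun b => rBC b c)).card : ℝ) ≤
        C2.card * m + (C1 R).card * ((1/2 - 4*δ) * m) := by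
      calc _ ≤ ∑ c ∈ C1 R, ((if (1/2 - 4*δ) * (m:ℝ) ≤ (Q.filter (fun b => rBC b c)).card
              then (m:ℝ) else 0) + (1/2 - 4*δ) * m) := by
            refine Finset.sum_le_sum fun c _ => ?_
            have hq : ((Q.filter (fun b => rBC b c)).card : ℝ) ≤ m := by
              rw [← hQc]; exact_mod_cast Finset.card_le_card (Finset.filter_subset _ _)
            split_ifs with hh
            · nlinarith
            · push Not at hh; linarith
        _ = _ := by
            rw [Finset.sum_add_distrib, ← Finset.sum_filter]
            simp [hC2]
    have h3 : ((C1 R).card : ℝ) * ((1/2 - 4*δ) * m) ≤ C.card * ((1/2 - 4*δ) * m) := by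
      gcongr
      have : 0 ≤ 1/2 - 4*δ := by linarith
      positivity
    have h4 : (δ * (C.card : ℝ)) * m ≤ C2.card * m := by nlinarith
    exact le_of_mul_le_mul_right h4 (by linarith)
  set RA : Finset α := Finset.univ.image R with hRA
  have hRAc : RA.card = m := by rw [hRA, Finset.card_image_of_injective _ hRinj]; simp
  obtain ⟨⟨R0, Q0⟩, hmem, hfib⟩ := Finset.exists_le_card_fiber_of_mul_le_card_of_maps_to
    (s := C2) (t := RA.powerset ×ˢ Q.powerset)
    (f := fun c => (RA.filter (fun a => rAC a c), Q.filter (fun b => rBC b c))) (n := m)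
    (by
      intro c _
      simp only [Finset.mem_product, Finset.mem_powerset]
      exact ⟨Finset.filter_subset _ _, Finset.filter_subset _ _⟩)
    ⟨(∅, ∅), by simp⟩
    (by
      rw [Finset.card_product, Finset.card_powerset, Finset.card_powerset, hRAc, hQc, ← mul_pow]
      have : ((4:ℝ)^m * m) ≤ C2.card := by nlinarith
      norm_num
      exact_mod_cast this)
  set T := C2.filter (fun c => (RA.filter (fun a => rAC a c), Q.filter (fun b => rBC b c)) = (R0, Q0))
    with hT
  have hTm : ∀ c ∈ T, c ∈ C2 ∧ RA.filter (fun a => rAC a c) = R0 ∧ Q.filter (fun b => rBC b c) = Q0 := by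
    intro c hc
    obtain ⟨h1, h2⟩ := Finset.mem_filter.1 hc
    rw [Prod.mk.injEq] at h2
    exact ⟨h1, h2⟩
  have hTn : T.Nonempty := by rw [← Finset.card_pos]; omega
  obtain ⟨c0, hc0⟩ := hTn
  obtain ⟨hc0C, hcR, hcQ⟩ := hTm c0 hc0
  obtain ⟨hc01, hc02⟩ := Finset.mem_filter.1 hc0C
  have hc03 := (Finset.mem_filter.1 hc01).2
  refine ⟨R0, Q0, T, ?_, ?_, ?_, ?_, ?_, ?_⟩
  · have : R0.card = (Finset.univ.filter (fun i => rAC (R i) c0)).card := by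
      rw [← hcR, hRA, Finset.filter_image, Finset.card_image_of_injective _ hRinj]
    rw [this]
    nlinarith
  · rw [← hcQ]; exact hc02
  · have : (m:ℝ) ≤ T.card := by exact_mod_cast hfib
    nlinarith
  · intro a ha b hb
    rw [← hcR] at ha
    rw [← hcQ] at hb
    obtain ⟨i, _, rfl⟩ := Finset.mem_image.1 (Finset.mem_filter.1 ha).1
    exact (hQg b (Finset.mem_filter.1 hb).1).2.1 i
  · intro a ha c hc
    rw [← (hTm c hc).2.1] at ha
    exact (Finset.mem_filter.1 ha).2
  · intro b hb c hc
    rw [← (hTm c hc).2.2] at hb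
    exact (Finset.mem_filter.1 hb).2

theorem numeric_lemma (ε δ ρ : ℝ) (hε : 0 < ε) (hδ : 0 < δ) (hδ16 : δ ≤ 1/16)
    (hδε : 128 * δ ≤ ε) (hρ : 0 < ρ) :
    ∃ t₀ : ℕ, ∀ t : ℕ, t₀ ≤ t → ∃ n m : ℕ, (n : ℝ) ≤ (2 : ℝ) ^ ((4 + ε) * (t : ℝ)) ∧
      1 ≤ m ∧ Real.exp (-(δ^2/2) * m) ≤ δ^2 ∧ (t : ℝ) ≤ (1/2 - 4*δ) * m ∧
      4/δ * (m * 4^m) ≤ ρ * (n : ℝ) := by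
  have hδ8 : 0 < 1/2 - 4*δ := by linarith
  have hb : (1:ℝ) < 2 ^ (ε/2) := Real.one_lt_rpow (by norm_num) (by positivity)
  have hlin := tendsto_pow_const_div_const_pow_of_one_lt 1 hb
  have hK : 0 < ρ * δ / 256 := by positivity
  have ev1 := hlin.eventually (gt_mem_nhds hK)
  have ev2 : ∀ᶠ t : ℕ in Filter.atTop, Real.exp (-(δ^2/2) * t) < δ^2 := by
    have : Filter.Tendsto (fun t : ℕ => Real.exp (-(δ^2/2) * t)) Filter.atTop (nhds 0) := by
      apply Real.tendsto_exp_atBot.comp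
      apply Filter.Tendsto.const_mul_atTop_of_neg
      · have : 0 < δ^2/2 := by positivity
        linarith
      · exact tendsto_natCast_atTop_atTop
    exact this.eventually (gt_mem_nhds (by positivity))
  obtain ⟨t₀, ht₀⟩ := Filter.eventually_atTop.1 ((ev1.and ev2).and (Filter.eventually_ge_atTop 1))
  refine ⟨t₀, fun t ht => ?_⟩
  obtain ⟨⟨h1, h2⟩, h3⟩ := ht₀ t ht
  have htR : (1:ℝ) ≤ t := by exact_mod_cast h3
  have hm0 : (2 + 32*δ) * (t:ℝ) ≤ ⌈(2 + 32*δ) * (t:ℝ)⌉₊ := Nat.le_ceil _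
  have hm2 : (⌈(2 + 32*δ) * (t:ℝ)⌉₊ : ℝ) < (2 + 32*δ) * (t:ℝ) + 1 :=
    Nat.ceil_lt_add_one (by positivity)
  generalize ⌈(2 + 32*δ) * (t:ℝ)⌉₊ = m at hm0 hm2
  have hmt : (t:ℝ) ≤ m := by nlinarith
  refine ⟨⌊(2 : ℝ) ^ ((4 + ε) * (t : ℝ))⌋₊, m, Nat.floor_le (by positivity), ?_, ?_, ?_, ?_⟩
  · exact_mod_cast htR.trans hmt
  · refine le_trans (Real.exp_le_exp.2 ?_) h2.le
    have : 0 < δ^2/2 := by positivity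
    nlinarith
  · have h4 : (1/2 - 4*δ) * ((2 + 32*δ) * (t:ℝ)) ≤ (1/2 - 4*δ) * m := by gcongr
    have h5 : 1 ≤ (1/2 - 4*δ) * (2 + 32*δ) := by nlinarith
    nlinarith
  · set N : ℝ := (2 : ℝ) ^ ((4 + ε) * (t : ℝ)) with hN
    have hN1 : 1 ≤ N := Real.one_le_rpow (by norm_num) (by positivity)
    have hfl : N / 2 ≤ (⌊N⌋₊ : ℝ) := by
      have ha := Nat.lt_floor_add_one N
      have hb' : 1 ≤ ⌊N⌋₊ := Nat.one_le_floor_iff N |>.2 hN1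
      have hb2 : (1:ℝ) ≤ (⌊N⌋₊ : ℝ) := by exact_mod_cast hb'
      linarith
    set Y : ℝ := (2:ℝ) ^ ((4 + ε/2) * (t:ℝ)) with hY
    have hY0 : 0 < Y := by positivity
    have hNY : N = Y * (2 ^ (ε/2)) ^ t := by
      rw [hN, hY, ← Real.rpow_natCast, ← Real.rpow_mul (by norm_num), ← Real.rpow_add (by norm_num)]
      congr 1; ring
    have h4m : (4:ℝ)^m ≤ 4 * Y := by
      have e1 : (4:ℝ)^m = (2:ℝ) ^ (2 * (m:ℝ)) := by
        rw [Real.rpow_mul (by norm_num), Real.rpow_natCast]; norm_num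
      have e2 : 4 * Y = (2:ℝ) ^ (2 + (4 + ε/2) * (t:ℝ)) := by
        rw [Real.rpow_add (by norm_num), hY]; norm_num
      rw [e1, e2]
      apply Real.rpow_le_rpow_of_exponent_le (by norm_num)
      nlinarith
    have hm5 : (m:ℝ) ≤ 5 * t := by nlinarith
    have hpw : (t:ℝ) ≤ ρ * δ / 256 * (2 ^ (ε/2)) ^ t := by
      rw [div_lt_iff₀ (by positivity), pow_one] at h1
      exact h1.le
    calc 4/δ * (m * 4^m) ≤ 4/δ * (5 * t * (4 * Y)) := by gcongr
      _ ≤ 4/δ * (5 * (ρ * δ / 256 * (2 ^ (ε/2)) ^ t) * (4 * Y)) := by gcongr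
      _ = 80/256 * ρ * N := by rw [hNY]; field_simp; ring
      _ ≤ ρ * (N/2) := by nlinarith
      _ ≤ _ := by gcongr

/-- consequence of Theorem 1.2 for triangles. For every `ε > 0` and every
graph `G` with `G →₂ K₃`, for all sufficiently large `t` we have
`B₂(G → K₃; t) ≤ 2^((4+ε)t)`. -/
theorem blowup_ramsey_triangle_bound
    (ε : ℝ) (hε : 0 < ε) (V : Type) [Fintype V] (G : SimpleGraph V)
    (hG : ArrowsFor G (⊤ : SimpleGraph (Fin 3)) 2) :
    ∃ t₀ : ℕ, ∀ t : ℕ, t₀ ≤ t →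
      ∃ n : ℕ, (n : ℝ) ≤ (2 : ℝ) ^ ((4 + ε) * (t : ℝ)) ∧
        BlowupArrow G (⊤ : SimpleGraph (Fin 3)) 2 n t := by
  classical
  obtain ⟨δ, hδ, hδ16, hδε⟩ : ∃ δ : ℝ, 0 < δ ∧ δ ≤ 1/16 ∧ 128 * δ ≤ ε :=
    ⟨min (1/16) (ε/128), by positivity, min_le_left _ _, by
      have := min_le_right (1/16 : ℝ) (ε/128); linarith⟩
  obtain ⟨ρ, hρ, hfam⟩ := family_lemma (Finset.univ.filter (fun e : Sym2 V => ¬ e.IsDiag))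
    (fun e he => (Finset.mem_filter.1 he).2) δ hδ (by linarith)
  obtain ⟨t₀, ht₀⟩ := numeric_lemma ε δ ρ hε hδ hδ16 hδε hρ
  refine ⟨t₀, fun t ht => ?_⟩
  obtain ⟨n, m, hn, hm1, hmexp, hmt, hnm⟩ := ht₀ t ht
  refine ⟨n, hn, fun C => ?_⟩
  obtain ⟨A, hA, hreg⟩ := hfam n C
  have hreg' : ∀ e : Sym2 V, ∃ c : Fin 2, ¬ e.IsDiag → ∀ u v, e = s(u, v) →
          LowReg δ (fun i j => C s((u, i), (v, j)) = c) (A u) (A v) := by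
    intro e
    by_cases he : e.IsDiag
    · exact ⟨0, fun h => absurd he h⟩
    · obtain ⟨c, hc⟩ := hreg e (by simp [he])
      exact ⟨c, fun _ => hc⟩
  choose χ hχ using hreg'
  obtain ⟨f, c, hf, hfc⟩ := hG χ
  have hlow : ∀ a b : Fin 3, a ≠ b →
      LowReg δ (fun i j => C s((f a, i), (f b, j)) = c) (A (f a)) (A (f b)) := by
    intro a b hab
    have h1 := (hfc a b hab).2
    have h2 := hχ s(f a, f b) (by simpa using fun h => hab (hf h)) _ _ rfl
    rwa [h1] at h2
  obtain ⟨R, Q, T, hR, hQ, hT, hRQ, hRT, hQT⟩ := triangle_lemma δ hδ hδ16 m hm1 hmexp _ _ _ _ _ _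
    (hnm.trans (hA _)) (hnm.trans (hA _)) (hnm.trans (hA _))
    (hlow 0 1 (by decide)) (hlow 0 2 (by decide)) (hlow 1 2 (by decide))
  have emb : ∀ W : Finset (Fin n), (1/2 - 4*δ) * m ≤ (W.card : ℝ) →
      ∃ g : Fin t → Fin n, Function.Injective g ∧ ∀ i, g i ∈ W := by
    intro W hW
    have htW : t ≤ W.card := by exact_mod_cast hmt.trans hW
    refine ⟨fun i => W.orderEmbOfFin rfl (Fin.castLE htW i), ?_, ?_⟩
    · intro i j h
      exact Fin.castLE_injective htW ((W.orderEmbOfFin rfl).injective h)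
    · intro i
      exact Finset.orderEmbOfFin_mem _ _ _
  obtain ⟨g0, hg0, hg0m⟩ := emb R hR
  obtain ⟨g1, hg1, hg1m⟩ := emb Q hQ
  obtain ⟨g2, hg2, hg2m⟩ := emb T hT
  have h01 : ∀ i j, C s((f 0, g0 i), (f 1, g1 j)) = c := fun i j => hRQ _ (hg0m i) _ (hg1m j)
  have h02 : ∀ i j, C s((f 0, g0 i), (f 2, g2 j)) = c := fun i j => hRT _ (hg0m i) _ (hg2m j)
  have h12 : ∀ i j, C s((f 1, g1 i), (f 2, g2 j)) = c := fun i j => hQT _ (hg1m i) _ (hg2m j)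
  refine ⟨f, ![g0, g1, g2], c, hf, ?_, ?_⟩
  · intro a
    fin_cases a
    · exact hg0
    · exact hg1
    · exact hg2
  · intro a b hab
    refine ⟨(hfc a b hab).1, ?_⟩
    intro i j
    fin_cases a <;> fin_cases b
    · exact absurd rfl hab
    · exact h01 i j
    · exact h02 i j
    · rw [Sym2.eq_swap]; exact h01 j i
    · exact absurd rfl hab
    · exact h12 i j
    · rw [Sym2.eq_swap]; exact h02 j i
    · rw [Sym2.eq_swap]; exact h12 j i
    · exact absurd rfl hab
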